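/- For every N ≥ 0 there exists κ ≥ 1, depending only on N, with the following property: let s > 0, z > 0, and let v be a harmonic field on the ball B_{2s} ⊆ ℝ³ such that ∫_{∂B_r} |v|² dσ ≤ z²·r^{2+2N} for every r ∈ (0, 2s). Then |v(q)| ≤ κ·z·|q|^{N} for every q ∈ ℝ³ with 0 < |q| ≤ s. -/

import Mathlib

open MeasureTheory Metric
open scoped RealInnerProductSpace

noncomputable section

abbrev E3 := EuclideanSpace ℝ (Fin 3)

/-- A harmonic field on an open set `Ω ⊆ ℝ³`: a smooth map whose total derivative is at
every point of `Ω` a symmetric, trace-free endomorphism of `ℝ³`. -/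
def IsHarmonicField (Ω : Set E3) (v : E3 → E3) : Prop :=
  ContDiffOn ℝ (⊤ : ℕ∞) v Ω ∧
    ∀ x ∈ Ω,
      (∀ u w : E3, ⟪fderiv ℝ v x u, w⟫ = ⟪fderiv ℝ v x w, u⟫) ∧
      LinearMap.trace ℝ E3 (fderiv ℝ v x).toLinearMap = 0

/-!
Every component of a harmonic field is harmonic: by the symmetry of second derivatives, `⟪Δ v, u⟫`
is the derivative along `u` of `tr (Dv) = 0`. The mean value property, averaged against the weight
`max 0 (1 - ‖x‖²)`, and the Cauchy–Schwarz inequality then bound `‖v q‖²`, up to a constant, by the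
mean of `‖v‖²` over the ball of radius `‖q‖ / 2` around `q`. That ball lies in the annulus
`‖q‖ / 2 ≤ ‖x‖ ≤ 3 / 2 * ‖q‖`, where integration in polar coordinates turns the bounds on the
spheres into a bound on `∫ ‖v‖²`. Polar coordinates produce the cone measure `Measure.toSphere`
rather than the Hausdorff measure of the sphere; only the domination of the former by a multiple of
the latter is needed.
-/

section Paraboloid

lemma hasDerivAt_sq_max_zero (t : ℝ) : HasDerivAt (fun t : ℝ ↦ max 0 t ^ 2) (2 * max 0 t) t := by
  rw [hasDerivAt_iff_isLittleO]
  refine Asymptotics.IsBigO.trans_isLittleO (g := fun y ↦ (y - t) ^ 2) (.of_bound 1 ?_) ?_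
  · refine .of_forall fun y ↦ ?_
    rw [Real.norm_eq_abs, Real.norm_of_nonneg (sq_nonneg _), abs_le, smul_eq_mul]
    rcases le_total 0 y with hy | hy <;> rcases le_total 0 t with ht | ht <;>
      simp only [max_eq_left, max_eq_right, hy, ht] <;> constructor <;>
      nlinarith [sq_nonneg (y - t), sq_nonneg y, sq_nonneg t]
  · simpa using Asymptotics.isLittleO_pow_sub_sub t one_lt_two

variable {E : Type*} [NormedAddCommGroup E]

/-- The radial kernel `x ↦ max 0 (1 - ‖x‖²)`, the weight of all the ball averages below.
Its square has gradient `-4 * paraboloid x • x`, so the radial field `paraboloid x • x` is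
itself a gradient and can be integrated by parts explicitly. -/
def paraboloid (x : E) : ℝ := max 0 (1 - ‖x‖ ^ 2)

lemma paraboloid_nonneg (x : E) : 0 ≤ paraboloid x := le_max_left _ _

lemma paraboloid_le_one (x : E) : paraboloid x ≤ 1 := by simp [paraboloid]

lemma paraboloid_eq_zero_of_one_le_norm {x : E} (hx : 1 ≤ ‖x‖) : paraboloid x = 0 :=
  max_eq_left (by nlinarith)

lemma paraboloid_pos_of_norm_lt_one {x : E} (hx : ‖x‖ < 1) : 0 < paraboloid x :=
  lt_max_of_lt_right (by nlinarith [norm_nonneg x])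

lemma norm_paraboloid_smul_le {F : Type*} [NormedAddCommGroup F] [NormedSpace ℝ F] {C : ℝ}
    {u : E → F} (hu : ∀ x ∈ closedBall 0 1, ‖u x‖ ≤ C) (x : E) :
    ‖paraboloid x • u x‖ ≤ C * paraboloid x := by
  rw [norm_smul, Real.norm_of_nonneg (paraboloid_nonneg x), mul_comm]
  rcases le_or_gt 1 ‖x‖ with hx | hx
  · simp [paraboloid_eq_zero_of_one_le_norm hx]
  · exact mul_le_mul_of_nonneg_right (hu x (mem_closedBall_zero_iff.2 hx.le))
      (paraboloid_nonneg x)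

@[fun_prop]
lemma continuous_paraboloid : Continuous (paraboloid : E → ℝ) := by
  unfold paraboloid
  fun_prop

lemma hasCompactSupport_paraboloid [ProperSpace E] :
    HasCompactSupport (paraboloid : E → ℝ) :=
  .intro (isCompact_closedBall 0 1) fun _ hx ↦
    paraboloid_eq_zero_of_one_le_norm (not_le.1 (mt mem_closedBall_zero_iff.2 hx)).le

variable [ProperSpace E] [MeasurableSpace E] [BorelSpace E] (μ : Measure E)

lemma integrable_paraboloid_smul [IsFiniteMeasureOnCompacts μ] {F : Type*} [NormedAddCommGroup F]
    [NormedSpace ℝ F] {u : E → F} (hu : Continuous u) :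
    Integrable (fun x ↦ paraboloid x • u x) μ :=
  (continuous_paraboloid.smul hu).integrable_of_hasCompactSupport
    hasCompactSupport_paraboloid.smul_right

lemma integral_paraboloid_pos [IsFiniteMeasureOnCompacts μ] [μ.IsOpenPosMeasure] :
    0 < ∫ x, paraboloid x ∂μ := by
  rw [integral_pos_iff_support_of_nonneg paraboloid_nonneg
    (continuous_paraboloid.integrable_of_hasCompactSupport hasCompactSupport_paraboloid)]
  exact (measure_ball_pos μ 0 one_pos).trans_le <| measure_mono fun x hx ↦
    (paraboloid_pos_of_norm_lt_one (mem_ball_zero_iff.1 hx)).ne'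

lemma hasDerivAt_integral_paraboloid_smul_comp [NormedSpace ℝ E] [IsFiniteMeasureOnCompacts μ]
    {F : Type*} [NormedAddCommGroup F] [NormedSpace ℝ F] {f : E → F} (hf : ContDiff ℝ 1 f) (q : E)
    (t : ℝ) :
    HasDerivAt (fun t : ℝ ↦ ∫ x, paraboloid x • f (q + t • x) ∂μ)
      (∫ x, paraboloid x • fderiv ℝ f (q + t • x) x ∂μ) t := by
  have : Continuous (fderiv ℝ f) := hf.continuous_fderiv one_ne_zero
  have hfc : Continuous f := hf.continuous
  obtain ⟨C, hC⟩ := (isCompact_closedBall t 1 |>.prod (isCompact_closedBall (0 : E) 1))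
    |>.exists_bound_of_continuousOn
      (f := fun p : ℝ × E ↦ fderiv ℝ f (q + p.1 • p.2) p.2) (by fun_prop)
  refine (hasDerivAt_integral_of_dominated_loc_of_deriv_le (closedBall_mem_nhds t one_pos)
    (bound := fun x ↦ C * paraboloid x)
    (F' := fun t x ↦ paraboloid x • fderiv ℝ f (q + t • x) x)
    (.of_forall fun t ↦ (integrable_paraboloid_smul μ (by fun_prop)).aestronglyMeasurable)
    (integrable_paraboloid_smul μ (by fun_prop))
    (integrable_paraboloid_smul μ (by fun_prop)).aestronglyMeasurable
    (.of_forall fun x t' ht' ↦ norm_paraboloid_smul_le (fun y hy ↦ hC (t', y) ⟨ht', hy⟩) x)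
    ((continuous_paraboloid.integrable_of_hasCompactSupport
      hasCompactSupport_paraboloid).const_mul C)
    (.of_forall fun x t' _ ↦ ?_)).2
  have hline : HasDerivAt (fun t : ℝ ↦ q + t • x) x t' := by
    simpa using ((hasDerivAt_id t').smul_const x).const_add q
  exact ((hf.differentiable one_ne_zero _).hasFDerivAt.comp_hasDerivAt t' hline).const_smul _

end Paraboloid

section MeanValue

open InnerProductSpace Module Set
open scoped Topology Laplacian

variable {E F : Type*} [NormedAddCommGroup E] [InnerProductSpace ℝ E]
  [NormedAddCommGroup F] [NormedSpace ℝ F]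

lemma hasFDerivAt_paraboloid_sq (x : E) :
    HasFDerivAt (fun x : E ↦ paraboloid x ^ 2) ((-4 * paraboloid x) • innerSL ℝ x) x := by
  have h := (hasDerivAt_sq_max_zero (1 - ‖x‖ ^ 2)).comp_hasFDerivAt x
    ((hasStrictFDerivAt_norm_sq x).hasFDerivAt.const_sub 1)
  refine h.congr_fderiv ?_
  rw [← Nat.cast_smul_eq_nsmul ℝ, ← neg_smul, smul_smul, paraboloid]
  congr 1
  push_cast
  ring

section Integral

variable [FiniteDimensional ℝ E] [MeasurableSpace E] [BorelSpace E] (μ : Measure E)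
  [μ.IsAddHaarMeasure]

lemma integral_paraboloid_mul_inner_smul {g : E → F} (hg : ContDiff ℝ 1 g) (v : E) :
    ∫ x, (paraboloid x * ⟪x, v⟫) • g x ∂μ =
      (1 / 4 : ℝ) • ∫ x, paraboloid x ^ 2 • fderiv ℝ g x v ∂μ := by
  have hgc : Continuous g := hg.continuous
  have : Continuous fun x ↦ fderiv ℝ g x v :=
    (hg.continuous_fderiv one_ne_zero).clm_apply continuous_const
  have hfderiv (x : E) :
      fderiv ℝ (fun x : E ↦ paraboloid x ^ 2) x v = -4 * (paraboloid x * ⟪x, v⟫) := by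
    simp [(hasFDerivAt_paraboloid_sq x).fderiv, mul_assoc]
  have hparts := integral_smul_fderiv_eq_neg_fderiv_smul_of_integrable (μ := μ) (v := v)
    (f := fun x ↦ paraboloid x ^ 2) (g := g)
    (by
      refine (integrable_paraboloid_smul μ (u := fun x ↦ (-4 * ⟪x, v⟫) • g x)
        (by fun_prop)).congr (.of_forall fun x ↦ ?_)
      simp only [hfderiv, smul_smul]
      ring_nf)
    (by simpa only [sq, mul_smul] using
      integrable_paraboloid_smul μ (u := fun x ↦ paraboloid x • _) (by fun_prop))
    (by simpa only [sq, mul_smul] using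
      integrable_paraboloid_smul μ (u := fun x ↦ paraboloid x • _) (by fun_prop))
    (fun x _ ↦ (hasFDerivAt_paraboloid_sq x).differentiableAt)
    (fun x _ ↦ hg.differentiable one_ne_zero x)
  simp_rw [hparts, hfderiv, mul_smul (-4 : ℝ), integral_smul, neg_smul, neg_neg, smul_smul]
  norm_num

lemma integral_paraboloid_smul_apply_self {A : E → E →L[ℝ] F} (hA : ContDiff ℝ 1 A)
    {ι : Type*} [Fintype ι] (b : OrthonormalBasis ι ℝ E) :
    ∫ x, paraboloid x • A x x ∂μ =
      (1 / 4 : ℝ) • ∫ x, paraboloid x ^ 2 • ∑ i, fderiv ℝ A x (b i) (b i) ∂μ := by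
  have hAc : Continuous A := hA.continuous
  have : Continuous (fderiv ℝ A) := hA.continuous_fderiv one_ne_zero
  have hA_apply (i : ι) (x : E) :
      fderiv ℝ (fun x ↦ A x (b i)) x (b i) = fderiv ℝ A x (b i) (b i) := by
    simp [fderiv_clm_apply (hA.differentiable one_ne_zero x) (differentiableAt_const _)]
  have hexpand (x : E) :
      paraboloid x • A x x = ∑ i, (paraboloid x * ⟪x, b i⟫) • A x (b i) := by
    conv_lhs => enter [2, 2]; rw [← b.sum_repr' x]
    simp only [map_sum, map_smul, Finset.smul_sum, mul_smul, real_inner_comm]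
  have hint (i : ι) : Integrable (fun x ↦ (paraboloid x * ⟪x, b i⟫) • A x (b i)) μ := by
    simp_rw [mul_smul]
    exact integrable_paraboloid_smul μ (by fun_prop)
  have hint' (i : ι) : Integrable (fun x ↦ paraboloid x ^ 2 • fderiv ℝ A x (b i) (b i)) μ := by
    simp_rw [sq, mul_smul]
    exact integrable_paraboloid_smul μ (by fun_prop)
  simp_rw [hexpand, Finset.smul_sum]
  rw [integral_finsetSum _ fun i _ ↦ hint i, integral_finsetSum _ fun i _ ↦ hint' i]
  simp_rw [integral_paraboloid_mul_inner_smul μ (hA.clm_apply contDiff_const), hA_apply,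
    Finset.smul_sum]

lemma integral_paraboloid_smul_fderiv {f : E → F} (hf : ContDiff ℝ 2 f) (q : E) (t : ℝ) :
    ∫ x, paraboloid x • fderiv ℝ f (q + t • x) x ∂μ =
      (1 / 4 : ℝ) • ∫ x, paraboloid x ^ 2 • t • Δ f (q + t • x) ∂μ := by
  have hDf : ContDiff ℝ 1 (fderiv ℝ f) := hf.fderiv_right (m := 1) (by norm_num)
  have hderiv (x : E) : HasFDerivAt (fun x ↦ fderiv ℝ f (q + t • x))
      ((fderiv ℝ (fderiv ℝ f) (q + t • x)).comp (t • .id ℝ E)) x :=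
    (hDf.differentiable one_ne_zero _).hasFDerivAt.comp x
      (((hasFDerivAt_id x).const_smul t).const_add q)
  rw [integral_paraboloid_smul_apply_self μ (A := fun x ↦ fderiv ℝ f (q + t • x))
    (hDf.comp (by fun_prop)) (stdOrthonormalBasis ℝ E)]
  simp [laplacian_eq_iteratedFDeriv_orthonormalBasis f (stdOrthonormalBasis ℝ E),
    iteratedFDeriv_two_apply, (hderiv _).fderiv, Finset.smul_sum]

lemma integral_paraboloid_smul_comp_of_laplacian_eq_zero [CompleteSpace F] {f : E → F}
    (hf : ContDiff ℝ 2 f) {q : E} {ρ : ℝ} (hρ : 0 ≤ ρ) (hΔ : ∀ x ∈ ball q ρ, Δ f x = 0) :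
    ∫ x, paraboloid x • f (q + ρ • x) ∂μ = (∫ x, paraboloid x ∂μ) • f q := by
  have hderiv (t : ℝ) := hasDerivAt_integral_paraboloid_smul_comp μ (hf.of_le one_le_two) q t
  have hzero (t : ℝ) (ht : t ∈ Ico 0 ρ) :
      ∫ x, paraboloid x • fderiv ℝ f (q + t • x) x ∂μ = 0 := by
    rw [integral_paraboloid_smul_fderiv μ hf, integral_eq_zero_of_ae, smul_zero]
    refine .of_forall fun x ↦ ?_
    rcases le_or_gt 1 ‖x‖ with hx | hx
    · simp [paraboloid_eq_zero_of_one_le_norm hx]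
    · have hmem : q + t • x ∈ ball q ρ := by
        rw [mem_ball_iff_norm, add_sub_cancel_left, norm_smul, Real.norm_of_nonneg ht.1]
        nlinarith [ht.1, ht.2]
      simp [hΔ _ hmem]
  have hconst := constant_of_has_deriv_right_zero
    (fun t _ ↦ (hderiv t).continuousAt.continuousWithinAt)
    (fun t ht ↦ hzero t ht ▸ (hderiv t).hasDerivWithinAt) ρ (right_mem_Icc.2 hρ)
  simpa [integral_smul_const] using hconst

end Integral

lemma exists_contDiff_eqOn_closedBall {n : ℕ∞} {f : E → F} {q : E} {r R : ℝ} (hr : 0 < r)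
    (hrR : r < R) (hf : ∀ x ∈ closedBall q R, ContDiffAt ℝ n f x) :
    ∃ g : E → F, ContDiff ℝ n g ∧ EqOn g f (closedBall q r) := by
  let χ : ContDiffBump q := ⟨r, R, hr, hrR⟩
  refine ⟨fun x ↦ χ x • f x, contDiff_iff_contDiffAt.2 fun x ↦ ?_, fun x hx ↦ ?_⟩
  · by_cases hx : x ∈ closedBall q R
    · exact χ.contDiff.contDiffAt.smul (hf x hx)
    · refine (contDiffAt_const (c := 0)).congr_of_eventuallyEq ?_
      filter_upwards [isClosed_closedBall.isOpen_compl.mem_nhds hx] with y hy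
      rw [χ.zero_of_le_dist (not_le.1 (mt mem_closedBall.2 hy)).le, zero_smul]
  · simp only [χ.one_of_mem_closedBall hx, one_smul]

lemma exists_gt_harmonicOnNhd_closedBall [FiniteDimensional ℝ E] {f : E → F} {q : E} {ρ : ℝ}
    (hρ : 0 ≤ ρ) (hf : HarmonicOnNhd f (closedBall q ρ)) :
    ∃ R > ρ, HarmonicOnNhd f (closedBall q R) := by
  obtain ⟨ε, hε, hsub⟩ := (isCompact_closedBall q ρ).exists_cthickening_subset_open
    (isOpen_setOfPred_harmonicAt (f := f)) fun x hx ↦ hf x hx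
  rw [cthickening_closedBall hε.le hρ] at hsub
  exact ⟨ε + ρ, by linarith, fun x hx ↦ hsub hx⟩

lemma exists_contDiff_eqOn_laplacian_eq_zero [FiniteDimensional ℝ E] {f : E → F} {q : E} {ρ : ℝ}
    (hρ : 0 < ρ) (hf : HarmonicOnNhd f (closedBall q ρ)) :
    ∃ g : E → F, ContDiff ℝ 2 g ∧ EqOn g f (closedBall q ρ) ∧ ∀ x ∈ ball q ρ, Δ g x = 0 := by
  obtain ⟨R, hρR, hfR⟩ := exists_gt_harmonicOnNhd_closedBall hρ.le hf
  obtain ⟨g, hg, hgf⟩ := exists_contDiff_eqOn_closedBall (n := 2) hρ hρR fun x hx ↦ (hfR x hx).1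
  refine ⟨g, hg, hgf, fun x hx ↦ ?_⟩
  have hnhds : g =ᶠ[𝓝 x] f :=
    (hgf.mono ball_subset_closedBall).eventuallyEq_of_mem (isOpen_ball.mem_nhds hx)
  rw [(laplacian_congr_nhds hnhds).self_of_nhds]
  exact (hf x (ball_subset_closedBall hx)).2.self_of_nhds

end MeanValue

section InteriorEstimate

open InnerProductSpace Module Set

lemma norm_integral_paraboloid_smul_sq_le {E F : Type*} [NormedAddCommGroup E] [ProperSpace E]
    [MeasurableSpace E] [BorelSpace E] (μ : Measure E) [IsFiniteMeasureOnCompacts μ]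
    [μ.IsOpenPosMeasure] [NormedAddCommGroup F] [NormedSpace ℝ F] {g : E → F}
    (hg : Continuous g) :
    ‖∫ x, paraboloid x • g x ∂μ‖ ^ 2 ≤
      (∫ x, paraboloid x ∂μ) * ∫ x, paraboloid x * ‖g x‖ ^ 2 ∂μ := by
  set c := ∫ x, paraboloid x ∂μ
  set m := ‖∫ x, paraboloid x • g x ∂μ‖
  have hc : 0 < c := integral_paraboloid_pos μ
  have hint {u : E → ℝ} (hu : Continuous u) (a : ℝ) :
      Integrable (fun x ↦ a * (paraboloid x * u x)) μ :=
    (integrable_paraboloid_smul μ hu).const_mul a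
  have hle : m ≤ ∫ x, paraboloid x * ‖g x‖ ∂μ := by
    refine (norm_integral_le_integral_norm _).trans_eq ?_
    simp only [norm_smul, Real.norm_of_nonneg (paraboloid_nonneg _)]
  have hyoung : 2 * c * m * ∫ x, paraboloid x * ‖g x‖ ∂μ ≤
      c ^ 2 * ∫ x, paraboloid x * ‖g x‖ ^ 2 ∂μ + m ^ 2 * ∫ x, paraboloid x * 1 ∂μ := by
    simp only [← integral_const_mul (_ * m), ← integral_const_mul (_ ^ 2)]
    rw [← integral_add (hint (by fun_prop) _) (hint continuous_const _)]
    refine integral_mono (hint (by fun_prop) _)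
      ((hint (by fun_prop) _).add (hint continuous_const _)) fun x ↦ ?_
    linarith [mul_nonneg (paraboloid_nonneg x) (sq_nonneg (c * ‖g x‖ - m))]
  simp only [mul_one] at hyoung
  refine le_of_mul_le_mul_left ?_ hc
  nlinarith [mul_le_mul_of_nonneg_left hle (mul_nonneg hc.le (norm_nonneg _) : 0 ≤ c * m)]

lemma setIntegral_closedBall_comp_add_smul {E F : Type*} [NormedAddCommGroup E] [NormedSpace ℝ E]
    [FiniteDimensional ℝ E] [MeasurableSpace E] [BorelSpace E] (μ : Measure E)
    [μ.IsAddHaarMeasure] [NormedAddCommGroup F] [NormedSpace ℝ F] (f : E → F) (q : E) {ρ : ℝ}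
    (hρ : 0 < ρ) :
    ∫ x in closedBall 0 1, f (q + ρ • x) ∂μ =
      (ρ ^ finrank ℝ E)⁻¹ • ∫ x in closedBall q ρ, f x ∂μ := by
  rw [Measure.setIntegral_comp_smul_of_pos μ (fun x ↦ f (q + x)) _ hρ,
    smul_unitClosedBall_of_nonneg hρ.le,
    ← (measurePreserving_add_left μ q).setIntegral_preimage_emb (measurableEmbedding_addLeft q) f,
    preimage_add_closedBall, sub_self]

variable {E F : Type*} [NormedAddCommGroup E] [InnerProductSpace ℝ E] [FiniteDimensional ℝ E]
  [MeasurableSpace E] [BorelSpace E] (μ : Measure E) [μ.IsAddHaarMeasure]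
  [NormedAddCommGroup F] [NormedSpace ℝ F] [CompleteSpace F]

lemma pow_mul_norm_sq_le_setIntegral_closedBall {f : E → F} {q : E} {ρ : ℝ} (hρ : 0 < ρ)
    (hf : HarmonicOnNhd f (closedBall q ρ)) :
    ρ ^ finrank ℝ E * (∫ x, paraboloid x ∂μ) * ‖f q‖ ^ 2 ≤ ∫ x in closedBall q ρ, ‖f x‖ ^ 2 ∂μ := by
  obtain ⟨g, hg, hgf, hΔ⟩ := exists_contDiff_eqOn_laplacian_eq_zero hρ hf
  have hgc : Continuous fun x ↦ g (q + ρ • x) := hg.continuous.comp (by fun_prop)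
  set c := ∫ x, paraboloid x ∂μ
  have hc : 0 < c := integral_paraboloid_pos μ
  have hweight : ∫ x, paraboloid x * ‖g (q + ρ • x)‖ ^ 2 ∂μ ≤
      ∫ x in closedBall 0 1, ‖g (q + ρ • x)‖ ^ 2 ∂μ := by
    rw [← integral_indicator measurableSet_closedBall]
    refine integral_mono (integrable_paraboloid_smul μ (by fun_prop))
      (((hgc.norm.pow 2).continuousOn.integrableOn_compact (isCompact_closedBall 0 1))
        |>.integrable_indicator measurableSet_closedBall) fun x ↦ ?_
    by_cases hx : x ∈ closedBall 0 1
    · rw [indicator_of_mem hx]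
      exact mul_le_of_le_one_left (by positivity) (paraboloid_le_one x)
    · rw [indicator_of_notMem hx, paraboloid_eq_zero_of_one_le_norm
        (not_le.1 (mt mem_closedBall_zero_iff.2 hx)).le, zero_mul]
  have hmean := norm_integral_paraboloid_smul_sq_le μ hgc
  rw [integral_paraboloid_smul_comp_of_laplacian_eq_zero μ hg hρ.le hΔ, norm_smul,
    Real.norm_of_nonneg hc.le, mul_pow, sq c, mul_assoc] at hmean
  calc ρ ^ finrank ℝ E * c * ‖f q‖ ^ 2
      = ρ ^ finrank ℝ E * (c * ‖g q‖ ^ 2) := by rw [hgf (mem_closedBall_self hρ.le), mul_assoc]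
    _ ≤ ρ ^ finrank ℝ E * ∫ x in closedBall 0 1, ‖g (q + ρ • x)‖ ^ 2 ∂μ := by
      gcongr
      exact (le_of_mul_le_mul_left hmean hc).trans hweight
    _ = ∫ x in closedBall q ρ, ‖g x‖ ^ 2 ∂μ := by
      rw [setIntegral_closedBall_comp_add_smul μ (fun x ↦ ‖g x‖ ^ 2) q hρ, smul_eq_mul,
        mul_inv_cancel_left₀ (by positivity)]
    _ = ∫ x in closedBall q ρ, ‖f x‖ ^ 2 ∂μ :=
      setIntegral_congr_fun measurableSet_closedBall fun x hx ↦ by simp only [hgf hx]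

end InteriorEstimate

section HarmonicField

open InnerProductSpace Module Filter
open scoped Topology Laplacian

lemma clm_fderiv_apply_eq_zero_of_eventually
    {E F G : Type*} [NormedAddCommGroup E] [NormedSpace ℝ E] [NormedAddCommGroup F]
    [NormedSpace ℝ F] [NormedAddCommGroup G] [NormedSpace ℝ G] (L : F →L[ℝ] G) {g : E → F}
    {x : E} (hg : DifferentiableAt ℝ g x) (h : ∀ᶠ y in 𝓝 x, L (g y) = 0) (w : E) :
    L (fderiv ℝ g x w) = 0 := by
  have hL : fderiv ℝ (fun y ↦ L (g y)) x = L ∘L fderiv ℝ g x :=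
    (L.hasFDerivAt.comp x hg.hasFDerivAt).fderiv
  have h0 : (fun y ↦ L (g y)) =ᶠ[𝓝 x] fun _ ↦ 0 := h
  rw [h0.fderiv_eq, fderiv_fun_const] at hL
  simpa using (DFunLike.congr_fun hL w).symm

variable {E : Type*} [NormedAddCommGroup E] [InnerProductSpace ℝ E]

lemma isSymmetric_fderiv_fderiv {v : E → E} {x : E}
    (hv : DifferentiableAt ℝ (fderiv ℝ v) x)
    (hsymm : ∀ᶠ y in 𝓝 x, (fderiv ℝ v y).toLinearMap.IsSymmetric) (w : E) :
    (fderiv ℝ (fderiv ℝ v) x w).toLinearMap.IsSymmetric := fun a b ↦ by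
  have h := clm_fderiv_apply_eq_zero_of_eventually
    ((innerSL ℝ b).comp (.apply ℝ E a) - (innerSL ℝ a).comp (.apply ℝ E b)) hv
    (hsymm.mono fun y hy ↦ by simpa [sub_eq_zero, real_inner_comm b] using hy a b) w
  simpa [sub_eq_zero, real_inner_comm b] using h

lemma trace_fderiv_fderiv_eq_zero {E : Type*} [NormedAddCommGroup E] [NormedSpace ℝ E]
    [FiniteDimensional ℝ E] {v : E → E} {x : E} (hv : DifferentiableAt ℝ (fderiv ℝ v) x)
    (htrace : ∀ᶠ y in 𝓝 x, LinearMap.trace ℝ E (fderiv ℝ v y).toLinearMap = 0) (w : E) :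
    LinearMap.trace ℝ E (fderiv ℝ (fderiv ℝ v) x w).toLinearMap = 0 :=
  clm_fderiv_apply_eq_zero_of_eventually
    (LinearMap.toContinuousLinearMap (LinearMap.trace ℝ E ∘ₗ ContinuousLinearMap.coeLM ℝ)) hv
    htrace w

variable [FiniteDimensional ℝ E]

lemma laplacian_eq_zero_of_isSymmetric_of_trace_eq_zero {v : E → E} {x : E}
    (hv : ContDiffAt ℝ 2 v x)
    (hsymm : ∀ᶠ y in 𝓝 x, (fderiv ℝ v y).toLinearMap.IsSymmetric)
    (htrace : ∀ᶠ y in 𝓝 x, LinearMap.trace ℝ E (fderiv ℝ v y).toLinearMap = 0) :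
    Δ v x = 0 := by
  have hdiff : DifferentiableAt ℝ (fderiv ℝ v) x :=
    (hv.fderiv_right (m := 1) (by norm_num)).differentiableAt one_ne_zero
  have hschwarz : IsSymmSndFDerivAt ℝ v x := hv.isSymmSndFDerivAt (by simp)
  let b := stdOrthonormalBasis ℝ E
  refine ext_inner_right ℝ fun u ↦ ?_
  calc ⟪Δ v x, u⟫ = ∑ i, ⟪fderiv ℝ (fderiv ℝ v) x (b i) (b i), u⟫ := by
        simp [laplacian_eq_iteratedFDeriv_orthonormalBasis v b, iteratedFDeriv_two_apply, sum_inner]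
    _ = ∑ i, ⟪b i, fderiv ℝ (fderiv ℝ v) x u (b i)⟫ := Finset.sum_congr rfl fun i _ ↦ by
        rw [← hschwarz.eq (b i) u]
        exact isSymmetric_fderiv_fderiv hdiff hsymm (b i) (b i) u
    _ = LinearMap.trace ℝ E (fderiv ℝ (fderiv ℝ v) x u).toLinearMap :=
        (LinearMap.trace_eq_sum_inner _ b).symm
    _ = ⟪(0 : E), u⟫ := by rw [trace_fderiv_fderiv_eq_zero hdiff htrace, inner_zero_left]

lemma harmonicAt_of_isSymmetric_of_trace_eq_zero {v : E → E} {x : E}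
    (hv : ContDiffAt ℝ 2 v x)
    (hsymm : ∀ᶠ y in 𝓝 x, (fderiv ℝ v y).toLinearMap.IsSymmetric)
    (htrace : ∀ᶠ y in 𝓝 x, LinearMap.trace ℝ E (fderiv ℝ v y).toLinearMap = 0) :
    HarmonicAt v x := by
  refine ⟨hv, ?_⟩
  filter_upwards [hv.eventually (by simp), hsymm.eventually_nhds, htrace.eventually_nhds]
    with y hvy hsymmy htracey
  exact laplacian_eq_zero_of_isSymmetric_of_trace_eq_zero hvy hsymmy htracey

lemma IsHarmonicField.harmonicOnNhd {Ω : Set E3} (hΩ : IsOpen Ω) {v : E3 → E3}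
    (hv : IsHarmonicField Ω v) : HarmonicOnNhd v Ω := fun x hx ↦ by
  have hnhds : ∀ᶠ y in 𝓝 x, y ∈ Ω := hΩ.mem_nhds hx
  refine harmonicAt_of_isSymmetric_of_trace_eq_zero
    ((hv.1.contDiffAt hnhds).of_le (by norm_cast)) (hnhds.mono fun y hy u w ↦ ?_)
    (hnhds.mono fun y hy ↦ (hv.2 y hy).2)
  exact ((hv.2 y hy).1 u w).trans (real_inner_comm _ _)

end HarmonicField

section ToSphere

open Module Set Filter
open scoped ENNReal Pointwise Topology

variable {E : Type*} [NormedAddCommGroup E] [NormedSpace ℝ E]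

-- The cone over a cap of radius `δ` is covered by `O(1 / δ)` balls of radius `2 * δ` centred on its
-- axis, so its volume is `O(δ ^ dim E / δ)`.
lemma Ioo_smul_closedBall_subset_biUnion (a : sphere (0 : E) 1) {δ : ℝ} (hδ : 0 < δ) :
    Ioo (0 : ℝ) 1 • (Subtype.val '' closedBall a δ : Set E) ⊆
      ⋃ k ∈ Finset.range (⌈1 / δ⌉₊ + 1), closedBall ((k * δ) • (a : E)) (2 * δ) := by
  rintro _ ⟨t, ht, _, ⟨x, hx, rfl⟩, rfl⟩
  simp only [mem_iUnion, Finset.mem_range, exists_prop]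
  set k := ⌊t / δ⌋₊
  have hk : k * δ ≤ t := (le_div_iff₀ hδ).1 (Nat.floor_le (div_nonneg ht.1.le hδ.le))
  have hk' : t < (k + 1) * δ := (div_lt_iff₀ hδ).1 (Nat.lt_floor_add_one _)
  refine ⟨k, ?_, ?_⟩
  · exact Nat.lt_succ_of_le <| (Nat.floor_mono (by gcongr; exact ht.2.le)).trans
      (Nat.floor_le_ceil _)
  · have hxa : ‖(x : E) - a‖ ≤ δ := by simpa [Subtype.dist_eq, dist_eq_norm] using hx
    have hsplit : t • (x : E) - (k * δ) • (a : E) = t • ((x : E) - a) + (t - k * δ) • (a : E) := by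
      module
    rw [mem_closedBall_iff_norm]
    calc ‖t • (x : E) - (k * δ) • (a : E)‖
        ≤ ‖t • ((x : E) - a)‖ + ‖(t - k * δ) • (a : E)‖ := hsplit ▸ norm_add_le _ _
      _ = t * ‖(x : E) - a‖ + (t - k * δ) := by
        rw [norm_smul, norm_smul, norm_eq_of_mem_sphere, mul_one, Real.norm_of_nonneg ht.1.le,
          Real.norm_of_nonneg (sub_nonneg.2 hk)]
      _ ≤ 2 * δ := by nlinarith [norm_nonneg ((x : E) - a), ht.1, ht.2]

variable [FiniteDimensional ℝ E] [MeasurableSpace E] [BorelSpace E] (μ : Measure E)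
  [μ.IsAddHaarMeasure] {n : ℕ}

lemma toSphere_closedBall_le (hE : finrank ℝ E = n + 1) (a : sphere (0 : E) 1) {δ : ℝ}
    (hδ : 0 < δ) (hδ1 : δ ≤ 1) :
    μ.toSphere (closedBall a δ) ≤
      ENNReal.ofReal ((n + 1) * 3 * 2 ^ (n + 1)) * μ (ball 0 1) * ENNReal.ofReal (δ ^ n) := by
  set m := ⌈1 / δ⌉₊ + 1
  have hm : m * δ ≤ 3 := by
    have hceil : (⌈1 / δ⌉₊ : ℝ) < 1 / δ + 1 := Nat.ceil_lt_add_one (by positivity)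
    have hinv : 1 / δ * δ = 1 := one_div_mul_cancel hδ.ne'
    push_cast [m]
    nlinarith
  calc μ.toSphere (closedBall a δ)
      = (n + 1) * μ (Ioo (0 : ℝ) 1 • (Subtype.val '' closedBall a δ : Set E)) := by
        rw [μ.toSphere_apply' measurableSet_closedBall, hE]
        push_cast
        rfl
    _ ≤ (n + 1) * ∑ k ∈ Finset.range m, μ (closedBall ((k * δ) • (a : E)) (2 * δ)) := by
        gcongr
        exact (measure_mono (Ioo_smul_closedBall_subset_biUnion a hδ)).trans
          (measure_biUnion_finset_le _ _)
    _ = ENNReal.ofReal ((n + 1) * (m * (2 * δ) ^ (n + 1))) * μ (ball 0 1) := by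
        simp_rw [μ.addHaar_closedBall _ (by positivity : 0 ≤ 2 * δ), hE, Finset.sum_const,
          Finset.card_range, nsmul_eq_mul]
        have hn : ENNReal.ofReal (n + 1) = n + 1 := by exact_mod_cast ENNReal.ofReal_natCast (n + 1)
        rw [ENNReal.ofReal_mul (by positivity), ENNReal.ofReal_mul (by positivity),
          ENNReal.ofReal_natCast, hn]
        ring
    _ ≤ ENNReal.ofReal ((n + 1) * 3 * 2 ^ (n + 1) * δ ^ n) * μ (ball 0 1) := by
        gcongr ENNReal.ofReal ?_ * _
        calc (n + 1) * (m * (2 * δ) ^ (n + 1))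
            = (n + 1) * (m * δ) * (2 ^ (n + 1) * δ ^ n) := by ring
          _ ≤ (n + 1) * 3 * (2 ^ (n + 1) * δ ^ n) := by gcongr
          _ = (n + 1) * 3 * 2 ^ (n + 1) * δ ^ n := by ring
    _ = _ := by
        rw [ENNReal.ofReal_mul (by positivity), mul_right_comm]

lemma exists_toSphere_le_smul_hausdorffMeasure (hE : finrank ℝ E = n + 1) :
    ∃ C : ℝ≥0∞, C ≠ ⊤ ∧ μ.toSphere ≤ C • μH[n] := by
  let C := ENNReal.ofReal ((n + 1) * 3 * 2 ^ (n + 1)) * μ (ball 0 1)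
  have hC0 : C ≠ 0 := mul_ne_zero (ENNReal.ofReal_pos.2 (by positivity)).ne'
    (measure_ball_pos μ _ one_pos).ne'
  have hCtop : C ≠ ⊤ := ENNReal.mul_ne_top ENNReal.ofReal_ne_top measure_ball_lt_top.ne
  refine ⟨C, hCtop, Measure.le_iff.2 fun s _ ↦ ?_⟩
  have hle : C⁻¹ • μ.toSphere ≤ μH[n] := by
    refine Measure.le_hausdorffMeasure _ _ (1 / 2) (by simp) fun t ht ↦ ?_
    rcases t.eq_empty_or_nonempty with rfl | ⟨a, ha⟩
    · simp
    have hbdd : Bornology.IsBounded t := 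
      isBounded_iff_ediam_ne_top.2 (ht.trans_lt (by simp)).ne
    have hdiam : diam t < 1 :=
      (ENNReal.toReal_mono (by simp) ht).trans_lt (by norm_num)
    have hball : ∀ᶠ δ in 𝓝[>] diam t, μ.toSphere t ≤ C * ENNReal.ofReal (δ ^ n) := by
      filter_upwards [Ioo_mem_nhdsGT hdiam] with δ hδ
      refine (measure_mono fun x hx ↦ ?_).trans
        (toSphere_closedBall_le μ hE a (diam_nonneg.trans_lt hδ.1) hδ.2.le)
      exact (dist_le_diam_of_mem hbdd hx ha).trans hδ.1.le
    have hlim : Tendsto (fun δ : ℝ ↦ C * ENNReal.ofReal (δ ^ n)) (𝓝[>] diam t)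
        (𝓝 (C * ENNReal.ofReal (diam t ^ n))) :=
      (ENNReal.Tendsto.const_mul (ENNReal.tendsto_ofReal ((continuous_pow n).tendsto _))
        (.inr hCtop)).mono_left nhdsWithin_le_nhds
    rw [Measure.smul_apply, smul_eq_mul, ENNReal.inv_mul_le_iff hC0 hCtop, ENNReal.rpow_natCast,
      ← ENNReal.ofReal_toReal hbdd.ediam_ne_top, ← ENNReal.ofReal_pow ENNReal.toReal_nonneg]
    exact ge_of_tendsto hlim hball
  simpa [ENNReal.inv_mul_le_iff hC0 hCtop] using hle s

end ToSphere

section Polar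

open Module Set
open scoped ENNReal

lemma lintegral_eq_lintegral_Ioi_toSphere {E : Type*} [NormedAddCommGroup E] [NormedSpace ℝ E]
    [FiniteDimensional ℝ E] [Nontrivial E] [MeasurableSpace E] [BorelSpace E] (μ : Measure E)
    [μ.IsAddHaarMeasure] {g : E → ℝ≥0∞} (hg : Measurable g) :
    ∫⁻ x, g x ∂μ = ∫⁻ r in Ioi (0 : ℝ), ENNReal.ofReal (r ^ (finrank ℝ E - 1)) *
      ∫⁻ x : sphere (0 : E) 1, g (r • (x : E)) ∂μ.toSphere := by
  have hm : Measurable fun p : sphere (0 : E) 1 × Ioi (0 : ℝ) ↦ g ((p.2 : ℝ) • (p.1 : E)) :=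
    hg.comp (by fun_prop)
  have hinv (x : ({0}ᶜ : Set E)) : g (((homeomorphUnitSphereProd E x).2 : ℝ) •
      ((homeomorphUnitSphereProd E x).1 : E)) = g x := by
    have : ‖(x : E)‖ ≠ 0 := norm_ne_zero_iff.2 x.2
    simp [smul_smul, this]
  have hpolar := μ.measurePreserving_homeomorphUnitSphereProd.lintegral_comp hm
  simp only [hinv] at hpolar
  have hcompl : ∫⁻ x : ({0}ᶜ : Set E), g x ∂μ.comap Subtype.val = ∫⁻ x, g x ∂μ := by
    rw [lintegral_subtype_comap (measurableSet_singleton _).compl, restrict_compl_singleton]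
  rw [← hcompl, hpolar, lintegral_prod_symm _ hm.aemeasurable, Measure.volumeIoiPow,
    lintegral_withDensity_eq_lintegral_mul _ (by fun_prop) hm.lintegral_prod_left']
  simp only [Pi.mul_apply]
  exact lintegral_subtype_comap measurableSet_Ioi fun r : ℝ ↦
    ENNReal.ofReal (r ^ (finrank ℝ E - 1)) * ∫⁻ x : sphere (0 : E) 1, g (r • (x : E)) ∂μ.toSphere

end Polar

section SphereMeasure

open Module Set Filter
open scoped ENNReal NNReal Topology Pointwise

lemma locallyLipschitz_stereoInvFun {E : Type*} [NormedAddCommGroup E] [InnerProductSpace ℝ E]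
    {v : E} (hv : ‖v‖ = 1) : LocallyLipschitz (stereoInvFun hv) := fun w ↦ by
  have hdiff : ContDiff ℝ 1 fun w : (ℝ ∙ v)ᗮ ↦ stereoInvFunAux v w :=
    contDiff_stereoInvFunAux.comp (ℝ ∙ v)ᗮ.subtypeL.contDiff
  obtain ⟨K, t, ht, hK⟩ := hdiff.locallyLipschitz w
  exact ⟨K, t, ht, fun x hx y hy ↦ hK hx hy⟩

lemma isFiniteMeasure_hausdorffMeasure_sphere {E : Type*} [NormedAddCommGroup E]
    [InnerProductSpace ℝ E] [FiniteDimensional ℝ E] [MeasurableSpace E] [BorelSpace E] {n : ℕ}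
    (hE : finrank ℝ E = n + 1) : IsFiniteMeasure (μH[n] : Measure (sphere (0 : E) 1)) := by
  have : Fact (finrank ℝ E = n + 1) := ⟨hE⟩
  have hlocal : IsLocallyFiniteMeasure (μH[n] : Measure (sphere (0 : E) 1)) := ⟨fun x ↦ by
    have hx : ‖-(x : E)‖ = 1 := by rw [norm_neg, norm_eq_of_mem_sphere]
    obtain ⟨K, t, ht, hK⟩ := locallyLipschitz_stereoInvFun hx 0
    have hpole : stereoInvFun hx 0 = x := Subtype.ext (by simp)
    have himage : stereoInvFun hx '' (t ∩ ball 0 1) ∈ 𝓝 (stereoInvFun hx 0) :=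
      (isOpenEmbedding_stereographic_symm hx).isOpenMap.image_mem_nhds
        (inter_mem ht (ball_mem_nhds 0 one_pos))
    rw [hpole] at himage
    refine ⟨_, himage, ?_⟩
    have hdim : finrank ℝ (ℝ ∙ -(x : E))ᗮ = n :=
      Submodule.finrank_orthogonal_span_singleton (norm_ne_zero_iff.1 (by simp [hx]))
    calc μH[n] (stereoInvFun hx '' (t ∩ ball 0 1))
        ≤ (K : ℝ≥0∞) ^ (n : ℝ) * μH[n] (t ∩ ball 0 1) :=
          (hK.mono inter_subset_left).hausdorffMeasure_image_le n.cast_nonneg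
      _ ≤ (K : ℝ≥0∞) ^ (n : ℝ) * μH[n] (ball (0 : (ℝ ∙ -(x : E))ᗮ) 1) := by
          gcongr
          exact inter_subset_right
      _ < ⊤ := by
          rw [← hdim]
          exact ENNReal.mul_lt_top (by simp) measure_ball_lt_top⟩
  exact CompactSpace.isFiniteMeasure

variable {E : Type*} [NormedAddCommGroup E] [NormedSpace ℝ E] [MeasurableSpace E] [BorelSpace E]

lemma map_smul_hausdorffMeasure_sphere {d r : ℝ} (hd : 0 ≤ d) (hr : 0 < r) :
    Measure.map (fun x : sphere (0 : E) 1 ↦ r • (x : E)) μH[d] =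
      ENNReal.ofReal (r ^ d)⁻¹ • (μH[d] : Measure E).restrict (sphere 0 r) := by
  have hm : Measurable fun x : sphere (0 : E) 1 ↦ r • (x : E) :=
    (continuous_subtype_val.const_smul r).measurable
  ext A hA
  have himage : Subtype.val '' ((fun x : sphere (0 : E) 1 ↦ r • (x : E)) ⁻¹' A) =
      r⁻¹ • (A ∩ sphere (0 : E) r) := by
    ext y
    simp only [mem_inv_smul_set_iff₀ hr.ne', mem_image, mem_preimage, Subtype.exists,
      mem_inter_iff, mem_sphere_zero_iff_norm, norm_smul, Real.norm_of_nonneg hr.le,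
      mul_eq_left₀ hr.ne', exists_and_left, exists_prop, exists_eq_right_right]
  rw [Measure.map_apply hm hA, Measure.smul_apply, Measure.restrict_apply hA,
    ← isometry_subtype_coe.hausdorffMeasure_image (.inl hd), himage,
    Measure.hausdorffMeasure_smul₀ hd (inv_ne_zero hr.ne'), ENNReal.smul_def, smul_eq_mul,
    smul_eq_mul, ← ENNReal.ofReal_coe_nnreal]
  simp [Real.inv_rpow hr.le, abs_of_pos hr]

lemma lintegral_smul_hausdorffMeasure_sphere {d r : ℝ} (hd : 0 ≤ d) (hr : 0 < r) {g : E → ℝ≥0∞}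
    (hg : Measurable g) :
    ∫⁻ x : sphere (0 : E) 1, g (r • (x : E)) ∂μH[d] =
      ENNReal.ofReal (r ^ d)⁻¹ * ∫⁻ y in sphere 0 r, g y ∂μH[d] := by
  have hm : Measurable fun x : sphere (0 : E) 1 ↦ r • (x : E) :=
    (continuous_subtype_val.const_smul r).measurable
  rw [← lintegral_map hg hm, map_smul_hausdorffMeasure_sphere hd hr, lintegral_smul_measure,
    smul_eq_mul]

end SphereMeasure

section Annulus

open Module Set
open scoped ENNReal Pointwise

variable {E : Type*} [NormedAddCommGroup E] [InnerProductSpace ℝ E] [FiniteDimensional ℝ E]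
  [MeasurableSpace E] [BorelSpace E] {n : ℕ}

lemma hausdorffMeasure_sphere_lt_top (hE : finrank ℝ E = n + 1) {r : ℝ} (hr : 0 < r) :
    μH[n] (sphere (0 : E) r) < ⊤ := by
  have := isFiniteMeasure_hausdorffMeasure_sphere hE
  have hunit : μH[n] (sphere (0 : E) 1) < ⊤ := by
    rw [← Subtype.range_coe (s := sphere (0 : E) 1), ← image_univ,
      isometry_subtype_coe.hausdorffMeasure_image (.inl n.cast_nonneg)]
    exact measure_lt_top _ _
  have hscale : r • sphere (0 : E) 1 = sphere 0 r := by
    simp [smul_sphere' hr.ne', abs_of_pos hr]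
  rw [← hscale, Measure.hausdorffMeasure_smul₀ n.cast_nonneg hr.ne']
  exact ENNReal.mul_lt_top ENNReal.coe_lt_top hunit

lemma integrableOn_sphere_hausdorffMeasure {F : Type*} [NormedAddCommGroup F]
    (hE : finrank ℝ E = n + 1) {r : ℝ} (hr : 0 < r) {f : E → F}
    (hf : ContinuousOn f (sphere 0 r)) : IntegrableOn f (sphere 0 r) μH[n] := by
  have hmeas : MeasurableSet (sphere (0 : E) r) := isClosed_sphere.measurableSet
  obtain ⟨C, hC⟩ := (isCompact_sphere (0 : E) r).exists_bound_of_continuousOn hf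
  exact .of_bound (hausdorffMeasure_sphere_lt_top hE hr) (hf.aestronglyMeasurable hmeas) C
    (ae_restrict_of_forall_mem hmeas hC)

lemma lintegral_sphere_indicator_le (hE : finrank ℝ E = n + 1) {a b B : ℝ} (ha : 0 < a)
    {f : E → ℝ} (hf : ContinuousOn f (closedBall 0 b \ ball 0 a)) (hf0 : ∀ x, 0 ≤ f x)
    (hB : ∀ r ∈ Icc a b, ∫ x in sphere (0 : E) r, f x ∂μH[n] ≤ B) (r : ℝ) :
    ∫⁻ x in sphere (0 : E) r,
        (closedBall 0 b \ ball 0 a).indicator (fun x ↦ ENNReal.ofReal (f x)) x ∂μH[n] ≤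
      (Icc a b).indicator (fun _ ↦ ENNReal.ofReal B) r := by
  have hmeas : MeasurableSet (sphere (0 : E) r) := isClosed_sphere.measurableSet
  have hmem (x : E) (hx : x ∈ sphere 0 r) : x ∈ closedBall (0 : E) b \ ball 0 a ↔ r ∈ Icc a b := by
    rw [mem_sdiff, mem_closedBall_zero_iff, mem_ball_zero_iff, mem_sphere_zero_iff_norm.1 hx,
      not_lt, and_comm, mem_Icc]
  by_cases hr : r ∈ Icc a b
  · have hsub : sphere (0 : E) r ⊆ closedBall 0 b \ ball 0 a := fun x hx ↦ (hmem x hx).2 hr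
    have hint : IntegrableOn f (sphere 0 r) μH[n] :=
      integrableOn_sphere_hausdorffMeasure hE (ha.trans_le hr.1) (hf.mono hsub)
    rw [indicator_of_mem hr, setLIntegral_congr_fun hmeas fun x hx ↦ indicator_of_mem (hsub hx) _,
      ← ofReal_integral_eq_lintegral_ofReal hint (.of_forall hf0)]
    exact ENNReal.ofReal_le_ofReal (hB r hr)
  · rw [indicator_of_notMem hr, setLIntegral_congr_fun hmeas fun x hx ↦
      indicator_of_notMem (mt (hmem x hx).1 hr) _, lintegral_zero]

variable (μ : Measure E) [μ.IsAddHaarMeasure]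

lemma exists_lintegral_le_lintegral_sphere (hE : finrank ℝ E = n + 1) :
    ∃ K : ℝ≥0∞, K ≠ ⊤ ∧ ∀ g : E → ℝ≥0∞, Measurable g →
      ∫⁻ x, g x ∂μ ≤ K * ∫⁻ r in Ioi (0 : ℝ), ∫⁻ y in sphere 0 r, g y ∂μH[n] := by
  have : Nontrivial E := nontrivial_of_finrank_pos (R := ℝ) (by omega)
  obtain ⟨K, hK, hle⟩ := exists_toSphere_le_smul_hausdorffMeasure μ hE
  refine ⟨K, hK, fun g hg ↦ ?_⟩
  rw [lintegral_eq_lintegral_Ioi_toSphere μ hg, hE, add_tsub_cancel_right,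
    ← lintegral_const_mul' _ _ hK]
  refine setLIntegral_mono' measurableSet_Ioi fun r (hr : 0 < r) ↦ ?_
  calc ENNReal.ofReal (r ^ n) * ∫⁻ x : sphere (0 : E) 1, g (r • (x : E)) ∂μ.toSphere
      ≤ ENNReal.ofReal (r ^ n) * ∫⁻ x : sphere (0 : E) 1, g (r • (x : E)) ∂(K • μH[n]) := by
        gcongr
    _ = K * (ENNReal.ofReal (r ^ n) * ENNReal.ofReal (r ^ n)⁻¹ *
          ∫⁻ y in sphere 0 r, g y ∂μH[n]) := by
        rw [lintegral_smul_measure, smul_eq_mul,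
          lintegral_smul_hausdorffMeasure_sphere n.cast_nonneg hr hg, Real.rpow_natCast]
        ring
    _ = K * ∫⁻ y in sphere 0 r, g y ∂μH[n] := by
        rw [← ENNReal.ofReal_mul (by positivity), mul_inv_cancel₀ (by positivity),
          ENNReal.ofReal_one, one_mul]

lemma exists_setIntegral_annulus_le (hE : finrank ℝ E = n + 1) :
    ∃ K : ℝ, 0 ≤ K ∧ ∀ {a b B : ℝ}, 0 < a → a ≤ b → ∀ {f : E → ℝ},
      ContinuousOn f (closedBall 0 b \ ball 0 a) → (∀ x, 0 ≤ f x) →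
      (∀ r ∈ Icc a b, ∫ x in sphere (0 : E) r, f x ∂μH[n] ≤ B) →
      ∫ x in closedBall 0 b \ ball 0 a, f x ∂μ ≤ K * (B * (b - a)) := by
  obtain ⟨K, hK, hpolar⟩ := exists_lintegral_le_lintegral_sphere μ hE
  refine ⟨K.toReal, ENNReal.toReal_nonneg, fun {a b B} ha hab f hf hf0 hB ↦ ?_⟩
  have hA : MeasurableSet (closedBall (0 : E) b \ ball 0 a) :=
    measurableSet_closedBall.diff measurableSet_ball
  have hmeas : Measurable
      ((closedBall (0 : E) b \ ball 0 a).indicator fun x ↦ ENNReal.ofReal (f x)) := by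
    classical
    rw [← piecewise_eq_indicator]
    exact (ENNReal.continuous_ofReal.comp_continuousOn hf).measurable_piecewise
      continuousOn_const hA
  have hint : IntegrableOn f (closedBall 0 b \ ball 0 a) μ :=
    hf.integrableOn_compact ((isCompact_closedBall 0 b).diff isOpen_ball)
  have hB0 : 0 ≤ B := (integral_nonneg hf0).trans (hB a ⟨le_rfl, hab⟩)
  refine (ENNReal.ofReal_le_ofReal_iff
    (mul_nonneg ENNReal.toReal_nonneg (mul_nonneg hB0 (sub_nonneg.2 hab)))).1 ?_
  calc ENNReal.ofReal (∫ x in closedBall 0 b \ ball 0 a, f x ∂μ)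
      = ∫⁻ x, (closedBall 0 b \ ball 0 a).indicator (fun x ↦ ENNReal.ofReal (f x)) x ∂μ := by
        rw [ofReal_integral_eq_lintegral_ofReal hint (.of_forall hf0), lintegral_indicator hA]
    _ ≤ K * ∫⁻ r in Ioi (0 : ℝ), (Icc a b).indicator (fun _ ↦ ENNReal.ofReal B) r := by
        refine (hpolar _ hmeas).trans ?_
        gcongr with r
        exact lintegral_sphere_indicator_le hE ha hf hf0 hB r
    _ ≤ K * ∫⁻ r, (Icc a b).indicator (fun _ ↦ ENNReal.ofReal B) r := by
        gcongr
        exact Measure.restrict_le_self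
    _ = ENNReal.ofReal (K.toReal * (B * (b - a))) := by
        rw [lintegral_indicator_const measurableSet_Icc, Real.volume_Icc,
          ENNReal.ofReal_mul ENNReal.toReal_nonneg, ENNReal.ofReal_mul hB0,
          ENNReal.ofReal_toReal hK]

end Annulus

section PointwiseBound

open InnerProductSpace Module Set

lemma rpow_le_two_rpow_abs_mul_rpow {x y : ℝ} (hx : 0 < x) (hxy : x / 2 ≤ y)
    (hyx : y ≤ 2 * x) (p : ℝ) : y ^ p ≤ 2 ^ |p| * x ^ p := by
  rcases le_total 0 p with hp | hp
  · rw [abs_of_nonneg hp, ← Real.mul_rpow two_pos.le hx.le]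
    exact Real.rpow_le_rpow (by linarith) hyx hp
  · calc y ^ p ≤ (x / 2) ^ p := Real.rpow_le_rpow_of_nonpos (by positivity) hxy hp
      _ = 2 ^ |p| * x ^ p := by
        rw [Real.div_rpow hx.le two_pos.le, abs_of_nonpos hp, Real.rpow_neg two_pos.le,
          div_eq_inv_mul]

variable {E F : Type*} [NormedAddCommGroup E]

lemma closedBall_half_norm_subset_annulus (q : E) :
    closedBall q (‖q‖ / 2) ⊆ closedBall 0 (3 / 2 * ‖q‖) \ ball 0 (‖q‖ / 2) := fun y hy ↦ by
  rw [mem_closedBall_iff_norm] at hy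
  rw [mem_sdiff, mem_closedBall_zero_iff, mem_ball_zero_iff, not_lt]
  constructor <;> linarith [norm_sub_norm_le y q, norm_sub_norm_le q y, norm_sub_rev y q]

variable [InnerProductSpace ℝ E] [FiniteDimensional ℝ E] [MeasurableSpace E] [BorelSpace E]
  [NormedAddCommGroup F] [NormedSpace ℝ F] [CompleteSpace F] {n : ℕ}

lemma exists_pow_mul_norm_sq_le_of_sphere_le (hE : finrank ℝ E = n + 1) :
    ∃ C : ℝ, 0 ≤ C ∧ ∀ (f : E → F) (q : E) (B : ℝ), q ≠ 0 →
      HarmonicOnNhd f (closedBall 0 (3 / 2 * ‖q‖) \ ball 0 (‖q‖ / 2)) →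
      (∀ r ∈ Icc (‖q‖ / 2) (3 / 2 * ‖q‖), ∫ x in sphere (0 : E) r, ‖f x‖ ^ 2 ∂μH[n] ≤ B) →
      ‖q‖ ^ n * ‖f q‖ ^ 2 ≤ C * B := by
  obtain ⟨K, hK, hannulus⟩ := exists_setIntegral_annulus_le (volume : Measure E) hE
  set c := ∫ x : E, paraboloid x
  have hc : 0 < c := integral_paraboloid_pos volume
  refine ⟨2 ^ (n + 1) * K / c, by positivity, fun f q B hq hf hB ↦ ?_⟩
  have hq : 0 < ‖q‖ := norm_pos_iff.2 hq
  have hcont : ContinuousOn (fun x ↦ ‖f x‖ ^ 2) (closedBall 0 (3 / 2 * ‖q‖) \ ball 0 (‖q‖ / 2)) :=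
    fun x hx ↦ ((hf x hx).1.continuousAt.norm.pow 2).continuousWithinAt
  have hsub := closedBall_half_norm_subset_annulus q
  have hscaled : (‖q‖ / 2) ^ (n + 1) * c * ‖f q‖ ^ 2 ≤ K * (B * ‖q‖) := by
    calc (‖q‖ / 2) ^ (n + 1) * c * ‖f q‖ ^ 2
        ≤ ∫ x in closedBall q (‖q‖ / 2), ‖f x‖ ^ 2 := by
          rw [← hE]
          exact pow_mul_norm_sq_le_setIntegral_closedBall volume (by positivity)
            fun x hx ↦ hf x (hsub hx)
      _ ≤ ∫ x in closedBall 0 (3 / 2 * ‖q‖) \ ball 0 (‖q‖ / 2), ‖f x‖ ^ 2 :=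
          setIntegral_mono_set
            (hcont.integrableOn_compact ((isCompact_closedBall 0 _).diff isOpen_ball))
            (.of_forall fun x ↦ by positivity) hsub.eventuallyLE
      _ ≤ K * (B * (3 / 2 * ‖q‖ - ‖q‖ / 2)) :=
          hannulus (by positivity) (by linarith) hcont (fun x ↦ by positivity) hB
      _ = K * (B * ‖q‖) := by ring
  rw [div_mul_eq_mul_div, le_div_iff₀ hc]
  refine le_of_mul_le_mul_right ?_ hq
  calc ‖q‖ ^ n * ‖f q‖ ^ 2 * c * ‖q‖
      = 2 ^ (n + 1) * ((‖q‖ / 2) ^ (n + 1) * c * ‖f q‖ ^ 2) := by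
        rw [div_pow]
        field_simp
        ring
    _ ≤ 2 ^ (n + 1) * (K * (B * ‖q‖)) := by gcongr
    _ = 2 ^ (n + 1) * K * B * ‖q‖ := by ring

theorem pointwise_bound_of_sphere_growth_general (hE : finrank ℝ E = n + 1) (N : ℝ) :
    ∃ κ : ℝ, 1 ≤ κ ∧ ∀ s z : ℝ, 0 ≤ z → ∀ v : E → F, HarmonicOnNhd v (ball 0 (2 * s)) →
      (∀ r ∈ Ioo 0 (2 * s),
        ∫ x in sphere (0 : E) r, ‖v x‖ ^ 2 ∂μH[n] ≤ z ^ 2 * r ^ (n + 2 * N)) →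
      ∀ q ≠ 0, ‖q‖ ≤ s → ‖v q‖ ≤ κ * z * ‖q‖ ^ N := by
  obtain ⟨C, hC, hbound⟩ := exists_pow_mul_norm_sq_le_of_sphere_le (F := F) hE
  set p := n + 2 * N
  refine ⟨max 1 √(C * 2 ^ |p|), le_max_left _ _, fun s z hz v hv hgrowth q hq hqs ↦ ?_⟩
  have hq' : 0 < ‖q‖ := norm_pos_iff.2 hq
  have hsphere (r : ℝ) (hr : r ∈ Icc (‖q‖ / 2) (3 / 2 * ‖q‖)) :
      ∫ x in sphere (0 : E) r, ‖v x‖ ^ 2 ∂μH[n] ≤ z ^ 2 * (2 ^ |p| * ‖q‖ ^ p) := by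
    refine (hgrowth r ⟨by linarith [hr.1], by linarith [hr.2]⟩).trans ?_
    gcongr
    exact rpow_le_two_rpow_abs_mul_rpow hq' hr.1 (by linarith [hr.2]) p
  have hsq : ‖v q‖ ^ 2 ≤ C * 2 ^ |p| * (z * ‖q‖ ^ N) ^ 2 := by
    refine le_of_mul_le_mul_left ?_ (pow_pos hq' n)
    have hpow : ‖q‖ ^ p = ‖q‖ ^ n * (‖q‖ ^ N) ^ 2 := by
      rw [Real.rpow_add hq', Real.rpow_natCast, mul_comm 2 N, Real.rpow_mul hq'.le, Real.rpow_two]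
    refine (hbound v q _ hq (fun x hx ↦ hv x ?_) hsphere).trans_eq (by rw [hpow]; ring)
    exact closedBall_subset_ball (by linarith) hx.1
  calc ‖v q‖ ≤ √(C * 2 ^ |p| * (z * ‖q‖ ^ N) ^ 2) := Real.le_sqrt_of_sq_le hsq
    _ = √(C * 2 ^ |p|) * (z * ‖q‖ ^ N) := by
      rw [Real.sqrt_mul (by positivity), Real.sqrt_sq (by positivity)]
    _ ≤ max 1 √(C * 2 ^ |p|) * (z * ‖q‖ ^ N) := by
      gcongr
      exact le_max_right _ _
    _ = _ := (mul_assoc _ _ _).symm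

end PointwiseBound

/-- The Euclidean model of the second bullet of Lemma 8.2: an integral growth bound on
spheres centered at a zero yields a pointwise Hölder bound. -/
theorem pointwise_bound_of_sphere_growth (N : ℝ) (hN : 0 ≤ N) :
    ∃ κ : ℝ, 1 ≤ κ ∧
      ∀ s : ℝ, 0 < s → ∀ z : ℝ, 0 < z →
        ∀ v : E3 → E3, IsHarmonicField (Metric.ball (0 : E3) (2 * s)) v →
          (∀ r ∈ Set.Ioo (0:ℝ) (2 * s),
            (∫ x in Metric.sphere (0 : E3) r, ‖v x‖ ^ 2 ∂μH[2]) ≤ z ^ 2 * r ^ (2 + 2 * N)) →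
          ∀ q : E3, 0 < ‖q‖ → ‖q‖ ≤ s → ‖v q‖ ≤ κ * z * ‖q‖ ^ N := by
  obtain ⟨κ, hκ, hbound⟩ := pointwise_bound_of_sphere_growth_general (E := E3) (F := E3) (n := 2)
    (by simp) N
  exact ⟨κ, hκ, fun s _ z hz v hv hgrowth q hq ↦ hbound s z hz.le v (hv.harmonicOnNhd isOpen_ball)
    (by exact_mod_cast hgrowth) q (norm_pos_iff.1 hq)⟩
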